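/- Let F : (0,∞) → ℝ be a function, let m and n be positive integers, and set d := min{m,n}. The following are equivalent: (1) F[A] is totally positive for every totally positive m × n matrix A; (2) F[A] is totally positive for every totally positive d × d matrix A; (3) if d = 1, F(x) > 0 for all x > 0; if d = 2, F(x) = c·x^α for some c > 0 and some α > 0; if d = 3, F(x) = c·x^α for some c > 0 and some α ≥ 1; if d ≥ 4, F(x) = c·x for some c > 0. -/

import Mathlib

/-- An `m × n` real matrix is totally positive if all of its minors are positive. -/
def IsTPMat {m n : ℕ} (A : Matrix (Fin m) (Fin n) ℝ) : Prop :=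
  ∀ (k : ℕ) (r : Fin k → Fin m) (c : Fin k → Fin n),
    StrictMono r → StrictMono c → 0 < (A.submatrix r c).det


/-- `F` preserves total positivity in size `m × n`. -/
def Pres (F : ℝ → ℝ) (m n : ℕ) : Prop :=
  ∀ A : Matrix (Fin m) (Fin n) ℝ, IsTPMat A → IsTPMat (A.map F)

lemma tp_transpose {m n : ℕ} {A : Matrix (Fin m) (Fin n) ℝ} (h : IsTPMat A) :
    IsTPMat A.transpose := by
  intro k r c hr hc
  have := h k c r hc hr
  rwa [← Matrix.det_transpose, Matrix.transpose_submatrix] at this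

lemma tp_sub {m n p q : ℕ} {A : Matrix (Fin m) (Fin n) ℝ} (h : IsTPMat A)
    (r : Fin p → Fin m) (c : Fin q → Fin n) (hr : StrictMono r) (hc : StrictMono c) :
    IsTPMat (A.submatrix r c) := by
  intro k r' c' hr' hc'
  have := h k (r ∘ r') (c ∘ c') (hr.comp hr') (hc.comp hc')
  simpa [Matrix.submatrix_submatrix] using this

lemma card_le {k m : ℕ} {r : Fin k → Fin m} (hr : StrictMono r) : k ≤ m := by
  simpa using Fintype.card_le_of_injective r hr.injective

/-- extension by a row of powers -/
noncomputable def extM {m n : ℕ} (A : Matrix (Fin m) (Fin n) ℝ) (T : ℝ) :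
    Matrix (Fin (m+1)) (Fin n) ℝ :=
  Matrix.of fun i j => Fin.lastCases (motive := fun _ => ℝ) (T ^ (j : ℕ)) (fun i => A i j) i

lemma extM_cast {m n : ℕ} (A : Matrix (Fin m) (Fin n) ℝ) (T : ℝ) (i : Fin m) (j : Fin n) :
    extM A T i.castSucc j = A i j := by simp [extM]

lemma extM_last {m n : ℕ} (A : Matrix (Fin m) (Fin n) ℝ) (T : ℝ) (j : Fin n) :
    extM A T (Fin.last m) j = T ^ (j : ℕ) := by simp [extM]

open Filter Topology in
lemma ext_minor {m n : ℕ} {A : Matrix (Fin m) (Fin n) ℝ} (h : IsTPMat A)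
    (k : ℕ) (r : Fin k → Fin (m+1)) (c : Fin k → Fin n) (hr : StrictMono r) (hc : StrictMono c) :
    ∀ᶠ T : ℝ in atTop, 0 < ((extM A T).submatrix r c).det := by
  rcases k with _ | k
  · simp
  -- all rows but the last lie in A
  have hlt : ∀ i : Fin k, r i.castSucc ≠ Fin.last m := by
    intro i hi
    have h1 : r i.castSucc < r (Fin.last k) := hr (Fin.castSucc_lt_last i)
    rw [hi] at h1
    exact absurd (Fin.le_last (r (Fin.last k))) (not_le.mpr h1)
  have hex : ∀ i : Fin k, ∃ i', r i.castSucc = Fin.castSucc i' := fun i => by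
    obtain ⟨y, hy⟩ := Fin.exists_castSucc_eq.mpr (hlt i)
    exact ⟨y, hy.symm⟩
  choose r' hr' using hex
  have hr'm : StrictMono r' := by
    intro a b hab
    have := hr (Fin.castSucc_lt_castSucc_iff.mpr hab)
    rw [hr', hr'] at this
    exact Fin.castSucc_lt_castSucc_iff.mp this
  by_cases hl : r (Fin.last k) = Fin.last m
  · have key : ∀ T : ℝ, ((extM A T).submatrix r c).det =
        ∑ j : Fin (k+1), ((-1 : ℝ) ^ (k + (j : ℕ)) *
          (A.submatrix r' (c ∘ j.succAbove)).det) * T ^ (c j : ℕ) := by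
      intro T
      rw [Matrix.det_succ_row _ (Fin.last k)]
      refine Finset.sum_congr rfl fun j _ => ?_
      have e1 : ((extM A T).submatrix r c) (Fin.last k) j = T ^ (c j : ℕ) := by
        simp [hl, extM_last]
      have e2 : ((extM A T).submatrix r c).submatrix (Fin.last k).succAbove j.succAbove
          = A.submatrix r' (c ∘ j.succAbove) := by
        ext a b
        simp [hr', extM_cast]
      rw [e1, e2]
      simp only [Fin.val_last]
      ring
    set D := (A.submatrix r' (c ∘ Fin.castSucc)).det with hD
    have hDpos : 0 < D := h k r' _ hr'm (hc.comp (Fin.strictMono_castSucc))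
    have hlim : Tendsto (fun T : ℝ => ((extM A T).submatrix r c).det / T ^ (c (Fin.last k) : ℕ))
        atTop (𝓝 (∑ j : Fin (k+1), if j = Fin.last k then D else 0)) := by
      simp_rw [key, Finset.sum_div]
      refine tendsto_finsetSum _ fun j _ => ?_
      split_ifs with hj
      · subst hj
        have : ∀ᶠ T : ℝ in atTop, D = ((-1 : ℝ) ^ (k + (Fin.last k : ℕ)) *
          (A.submatrix r' (c ∘ (Fin.last k).succAbove)).det) * T ^ (c (Fin.last k) : ℕ)
            / T ^ (c (Fin.last k) : ℕ) := by
          filter_upwards [eventually_gt_atTop 0] with T hT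
          rw [mul_div_assoc, div_self (pow_pos hT _).ne', Fin.succAbove_last]
          simp [← hD, ← two_mul]
        exact tendsto_const_nhds.congr' this
      · have hlt : c j < c (Fin.last k) := hc (Fin.lt_last_iff_ne_last.mpr hj)
        have := (Asymptotics.isLittleO_pow_pow_atTop_of_lt (𝕜 := ℝ)
          (Fin.lt_def.mp hlt)).tendsto_div_nhds_zero
        have h2 := this.const_mul ((-1 : ℝ) ^ (k + (j : ℕ)) *
          (A.submatrix r' (c ∘ j.succAbove)).det)
        simpa [mul_div_assoc] using h2
    simp only [Finset.sum_ite_eq', Finset.mem_univ, if_true] at hlim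
    filter_upwards [hlim.eventually (lt_mem_nhds hDpos), eventually_gt_atTop 0] with T h1 h2
    exact (div_pos_iff_of_pos_right (pow_pos h2 _)).mp h1
  · obtain ⟨y, hy⟩ := Fin.exists_castSucc_eq.mpr hl
    have hall : ∀ i, ∃ i', r i = Fin.castSucc i' := by
      intro i
      refine Fin.lastCases ⟨y, hy.symm⟩ (fun i => ⟨_, hr' i⟩) i
    choose r2 hr2 using hall
    refine Eventually.of_forall fun T => ?_
    have e : (extM A T).submatrix r c = A.submatrix r2 c := by
      ext a b
      simp [hr2, extM_cast]
    rw [e]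
    refine h _ _ _ ?_ hc
    intro a b hab
    have := hr hab
    rw [hr2, hr2] at this
    exact Fin.castSucc_lt_castSucc_iff.mp this

open Filter Topology in
lemma ext_exists {m n : ℕ} {A : Matrix (Fin m) (Fin n) ℝ} (h : IsTPMat A) :
    ∃ T, IsTPMat (extM A T) := by
  have : ∀ᶠ T : ℝ in atTop, ∀ k : Fin (n+1), ∀ r : Fin k → Fin (m+1), ∀ c : Fin k → Fin n,
      StrictMono r → StrictMono c → 0 < ((extM A T).submatrix r c).det := by
    refine eventually_all.mpr fun k => eventually_all.mpr fun r => eventually_all.mpr fun c => ?_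
    by_cases hr : StrictMono r
    · by_cases hc : StrictMono c
      · filter_upwards [ext_minor h k r c hr hc] with T hT _ _ using hT
      · exact Eventually.of_forall fun _ _ h => absurd h hc
    · exact Eventually.of_forall fun _ h => absurd h hr
  obtain ⟨T, hT⟩ := this.exists
  refine ⟨T, fun k r c hr hc => ?_⟩
  exact hT ⟨k, Nat.lt_succ_of_le (card_le hc)⟩ r c hr hc

lemma pres_succ {F : ℝ → ℝ} {m n : ℕ} (h : Pres F (m+1) n) : Pres F m n := by
  intro A hA
  obtain ⟨T, hT⟩ := ext_exists hA
  have := tp_sub (h _ hT) Fin.castSucc id Fin.strictMono_castSucc strictMono_id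
  have e : ((extM A T).map F).submatrix Fin.castSucc id = A.map F := by
    ext a b
    simp [extM_cast]
  rwa [e] at this

lemma pres_le_left {F : ℝ → ℝ} {m n p : ℕ} (hp : p ≤ m) (h : Pres F m n) : Pres F p n := by
  induction m, hp using Nat.le_induction with
  | base => exact h
  | succ m _ ih => exact ih (pres_succ h)

lemma pres_symm {F : ℝ → ℝ} {m n : ℕ} (h : Pres F m n) : Pres F n m := by
  intro A hA
  have := tp_transpose (h _ (tp_transpose hA))
  exact this

lemma pres_le {F : ℝ → ℝ} {m n p q : ℕ} (hp : p ≤ m) (hq : q ≤ n) (h : Pres F m n) :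
    Pres F p q :=
  pres_symm (pres_le_left hq (pres_symm (pres_le_left hp h)))

lemma tp_entry {m n : ℕ} {A : Matrix (Fin m) (Fin n) ℝ} (h : IsTPMat A) (i : Fin m) (j : Fin n) :
    0 < A i j := by
  have := h 1 (fun _ => i) (fun _ => j) (Subsingleton.strictMono _) (Subsingleton.strictMono _)
  simpa using this

lemma tp_two {m n : ℕ} {A : Matrix (Fin m) (Fin n) ℝ} (h : IsTPMat A) {i i' : Fin m}
    {j j' : Fin n} (hi : i < i') (hj : j < j') :
    A i j' * A i' j < A i j * A i' j' := by
  have := h 2 ![i, i'] ![j, j'] (by intro a b; fin_cases a <;> fin_cases b <;> simp [hi])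
    (by intro a b; fin_cases a <;> fin_cases b <;> simp [hj])
  rw [Matrix.det_fin_two] at this
  simpa using this

lemma pres_pos {F : ℝ → ℝ} (h : Pres F 1 1) {x : ℝ} (hx : 0 < x) : 0 < F x := by
  have hA : IsTPMat (Matrix.of fun (_ _ : Fin 1) => x) := by
    intro k r c hr hc
    have := card_le hr
    interval_cases k
    · simp
    · simpa using hx
  simpa using tp_entry (h _ hA) 0 0

lemma tri3 (a b c : Fin 3) (h1 : a < b) (h2 : b < c) : a = 0 ∧ b = 1 ∧ c = 2 := by
  revert a b c; decide

lemma two2 (a b : Fin 2) (h1 : a < b) : a = 0 ∧ b = 1 := by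
  revert a b; decide

lemma two3 (a b : Fin 3) (h1 : a < b) :
    (a = 0 ∧ b = 1) ∨ (a = 0 ∧ b = 2) ∨ (a = 1 ∧ b = 2) := by
  revert a b; decide

lemma two4 (a b : Fin 4) (h1 : a < b) :
    (a = 0 ∧ b = 1) ∨ (a = 0 ∧ b = 2) ∨ (a = 0 ∧ b = 3) ∨ (a = 1 ∧ b = 2) ∨ (a = 1 ∧ b = 3) ∨
    (a = 2 ∧ b = 3) := by
  revert a b; decide

lemma tri4 (a b c : Fin 4) (h1 : a < b) (h2 : b < c) :
    (a = 0 ∧ b = 1 ∧ c = 2) ∨ (a = 0 ∧ b = 1 ∧ c = 3) ∨ (a = 0 ∧ b = 2 ∧ c = 3) ∨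
    (a = 1 ∧ b = 2 ∧ c = 3) := by
  revert a b c; decide

lemma id4 (r : Fin 4 → Fin 4) (hr : StrictMono r) : r = id := by
  have h1 := hr (show (0 : Fin 4) < 1 by decide)
  have h2 := hr (show (1 : Fin 4) < 2 by decide)
  have h3 := hr (show (2 : Fin 4) < 3 by decide)
  ext i
  fin_cases i <;> simp <;> omega

lemma pres_two {F : ℝ → ℝ} (h : Pres F 2 2) {a b c d : ℝ} (ha : 0 < a) (hb : 0 < b) (hc : 0 < c)
    (hd : 0 < d) (hh : b * c < a * d) : F b * F c < F a * F d := by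
  have hA : IsTPMat !![a, b; c, d] := by
    intro k r s hr hs
    have := card_le hr
    interval_cases k
    · simp
    · rw [Matrix.det_fin_one, Matrix.submatrix_apply]
      generalize r 0 = i
      generalize s 0 = j
      fin_cases i <;> fin_cases j <;> simpa
    · obtain ⟨h1, h2⟩ := two2 _ _ (hr (show (0 : Fin 2) < 1 by decide))
      obtain ⟨h3, h4⟩ := two2 _ _ (hs (show (0 : Fin 2) < 1 by decide))
      rw [Matrix.det_fin_two]
      simp [h1, h2, h3, h4, hh]
  simpa using tp_two (h _ hA) (show (0 : Fin 2) < 1 by decide) (show (0 : Fin 2) < 1 by decide)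

lemma incr_bound {h : ℝ → ℝ} (h0 : h 0 = 0)
    (hP : ∀ a b c d, b + c < a + d → h b + h c < h a + h d) (n : ℕ) (hn : 0 < n) (x δ : ℝ)
    (hδ : δ < 1 / n) : h (x + δ) - h x < h 1 / n := by
  have hn' : (0 : ℝ) < n := by exact_mod_cast hn
  have h1 : ∀ k ∈ Finset.range n, h (x + δ) - h x < h (((k + 1 : ℕ) : ℝ) / n) - h ((k : ℝ) / n) := by
    intro k _
    have := hP (((k + 1 : ℕ) : ℝ) / n) (x + δ) ((k : ℝ) / n) x (by
      have : (((k + 1 : ℕ) : ℝ) / n) = (k : ℝ) / n + 1 / n := by push_cast; ring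
      rw [this]; linarith)
    linarith
  have h2 := Finset.sum_lt_sum_of_nonempty (Finset.nonempty_range_iff.mpr hn.ne') h1
  rw [Finset.sum_range_sub (fun k : ℕ => h ((k : ℝ) / n))] at h2
  simp only [Finset.sum_const, Finset.card_range, nsmul_eq_mul, div_self hn'.ne', Nat.cast_zero,
    zero_div, h0, sub_zero] at h2
  rw [lt_div_iff₀ hn']
  linarith

lemma incr_linear {h : ℝ → ℝ} (h0 : h 0 = 0)
    (hP : ∀ a b c d, b + c < a + d → h b + h c < h a + h d) (x : ℝ) : h x = x * h 1 := by
  have hpos : 0 < h 1 := by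
    have := hP 1 0 0 0 (by norm_num)
    linarith
  have hsmall : ∀ ε > 0, ∃ n : ℕ, 0 < n ∧ h 1 / n < ε := by
    intro ε hε
    obtain ⟨n, hn⟩ := exists_nat_gt (h 1 / ε)
    have hn' : (0 : ℝ) < n := lt_trans (by positivity) hn
    refine ⟨n, by exact_mod_cast hn', ?_⟩
    rw [div_lt_iff₀ hε] at hn
    rw [div_lt_iff₀ hn']
    linarith
  have hadd : ∀ x y, h (x + y) = h x + h y := by
    intro x y
    apply le_antisymm
    · refine le_of_forall_pos_lt_add fun ε hε => ?_
      obtain ⟨n, hn, hlt⟩ := hsmall ε hε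
      have hn' : (0 : ℝ) < n := by exact_mod_cast hn
      have hd : (0 : ℝ) < 1 / (2 * n) := by positivity
      have hd2 : (1 : ℝ) / (2 * n) < 1 / n := by
        apply one_div_lt_one_div_of_lt hn'; linarith
      have a1 := incr_bound h0 hP n hn y _ hd2
      have a2 := hP x (x + y) 0 (y + 1 / (2 * n)) (by linarith)
      linarith
    · refine le_of_forall_pos_lt_add fun ε hε => ?_
      obtain ⟨n, hn, hlt⟩ := hsmall ε hε
      have hn' : (0 : ℝ) < n := by exact_mod_cast hn
      have hd : (0 : ℝ) < 1 / (2 * n) := by positivity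
      have hd2 : (1 : ℝ) / (2 * n) < 1 / n := by
        apply one_div_lt_one_div_of_lt hn'; linarith
      have a1 := incr_bound h0 hP n hn (x + y) _ hd2
      have a2 := hP (x + y + 1 / (2 * n)) x y 0 (by linarith)
      linarith
  let f : ℝ →+ ℝ := ⟨⟨h, h0⟩, hadd⟩
  have hf : Continuous f := by
    apply continuous_of_continuousAt_zero f
    rw [Metric.continuousAt_iff]
    intro ε hε
    obtain ⟨n, hn, hlt⟩ := hsmall ε hε
    have hn' : (0 : ℝ) < n := by exact_mod_cast hn
    refine ⟨1 / n, by positivity, fun {δ} hδ => ?_⟩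
    rw [Real.dist_eq, sub_zero] at hδ
    rw [Real.dist_eq, map_zero, sub_zero]
    change |h δ| < ε
    have a1 := incr_bound h0 hP n hn 0 δ (lt_of_le_of_lt (le_abs_self _) hδ)
    have a2 := incr_bound h0 hP n hn 0 (-δ) (lt_of_le_of_lt (neg_le_abs _) hδ)
    have a3 := hadd δ (-δ)
    simp only [zero_add, add_neg_cancel, h0] at a1 a2 a3
    rw [abs_lt]; constructor <;> linarith
  have := map_real_smul f hf x 1
  simp only [smul_eq_mul, mul_one] at this
  exact this

lemma power_form {F : ℝ → ℝ} (hF : ∀ x, 0 < x → 0 < F x)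
    (h2 : ∀ a b c d : ℝ, 0 < a → 0 < b → 0 < c → 0 < d → b * c < a * d → F b * F c < F a * F d) :
    ∃ c : ℝ, 0 < c ∧ ∃ α : ℝ, 0 < α ∧ ∀ x : ℝ, 0 < x → F x = c * x ^ α := by
  let h : ℝ → ℝ := fun s => Real.log (F (Real.exp s)) - Real.log (F 1)
  have h0 : h 0 = 0 := by simp [h]
  have hP : ∀ a b c d, b + c < a + d → h b + h c < h a + h d := by
    intro a b c d hh
    have := h2 (Real.exp a) (Real.exp b) (Real.exp c) (Real.exp d) (Real.exp_pos _)
      (Real.exp_pos _) (Real.exp_pos _) (Real.exp_pos _)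
      (by rw [← Real.exp_add, ← Real.exp_add]; exact Real.exp_lt_exp.mpr hh)
    have pa := hF _ (Real.exp_pos a)
    have pb := hF _ (Real.exp_pos b)
    have pc := hF _ (Real.exp_pos c)
    have pd := hF _ (Real.exp_pos d)
    have := Real.log_lt_log (by positivity) this
    rw [Real.log_mul pb.ne' pc.ne', Real.log_mul pa.ne' pd.ne'] at this
    simp only [h]
    linarith
  refine ⟨F 1, hF 1 one_pos, h 1, ?_, fun x hx => ?_⟩
  · have := hP 1 0 0 0 (by norm_num)
    linarith
  · have := incr_linear h0 hP (Real.log x)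
    have e : Real.log (F x) = Real.log (F 1) + Real.log x * h 1 := by
      rw [← this]; simp only [h]; rw [Real.exp_log hx]; ring
    rw [← Real.exp_log (hF x hx), e, Real.exp_add, Real.exp_log (hF 1 one_pos),
      Real.rpow_def_of_pos hx]

lemma tp_three {F : ℝ → ℝ} (h : Pres F 3 3) {s p q r : ℝ} (hs : 0 < s) (hp : s < p) (hq : s < q)
    (hh : p * q < s * r) : 0 < (Matrix.map !![1, 1, 1; 1, 1+s, 1+p; 1, 1+q, 1+r] F).det := by
  have hr : p < r := by
    by_contra hc
    push Not at hc
    nlinarith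
  have hr2 : q < r := by
    by_contra hc
    push Not at hc
    nlinarith
  have hbig : (1 + p) * (1 + q) < (1 + s) * (1 + r) := by
    have : 0 < (p - s) * (q - s) := mul_pos (by linarith) (by linarith)
    have : s * (p + q - s) < s * r := by nlinarith
    have := lt_of_mul_lt_mul_left this hs.le
    nlinarith
  have hA : IsTPMat !![1, 1, 1; 1, 1+s, 1+p; 1, 1+q, 1+r] := by
    intro k r' c' hr' hc'
    have := card_le hr'
    interval_cases k
    · simp
    · rw [Matrix.det_fin_one, Matrix.submatrix_apply]
      generalize r' 0 = i
      generalize c' 0 = j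
      fin_cases i <;> fin_cases j <;> simp <;> linarith
    · rw [Matrix.det_fin_two]
      simp only [Matrix.submatrix_apply]
      rcases two3 _ _ (hr' (show (0 : Fin 2) < 1 by decide)) with ⟨h1, h2⟩ | ⟨h1, h2⟩ | ⟨h1, h2⟩ <;>
      rcases two3 _ _ (hc' (show (0 : Fin 2) < 1 by decide)) with ⟨h3, h4⟩ | ⟨h3, h4⟩ | ⟨h3, h4⟩ <;>
      rw [h1, h2, h3, h4] <;> simp <;> linarith
    · obtain ⟨h1, h2, h3⟩ := tri3 _ _ _ (hr' (show (0 : Fin 3) < 1 by decide))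
        (hr' (show (1 : Fin 3) < 2 by decide))
      obtain ⟨h4, h5, h6⟩ := tri3 _ _ _ (hc' (show (0 : Fin 3) < 1 by decide))
        (hc' (show (1 : Fin 3) < 2 by decide))
      rw [Matrix.det_fin_three]
      simp only [Matrix.submatrix_apply]
      rw [h1, h2, h3, h4, h5, h6]
      simp
      nlinarith
  have := h _ hA 3 id id strictMono_id strictMono_id
  simpa only [Matrix.submatrix_id_id] using this

open Filter Topology in
lemma alpha_ge_one {F : ℝ → ℝ} (h : Pres F 3 3) {c α : ℝ} (hc : 0 < c) (hα : 0 < α)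
    (hF : ∀ x : ℝ, 0 < x → F x = c * x ^ α) : 1 ≤ α := by
  have key : ∀ l : ℝ, 1 < l → ((1 + l) ^ α - 1) * ((1 + l) ^ α - 1)
      ≤ (2 ^ α - 1) * ((2 + l ^ 2) ^ α - 1) := by
    intro l hl
    have := tp_three h (s := 1) (p := l) (q := l) (r := l ^ 2 + 1) one_pos hl hl (by nlinarith)
    rw [Matrix.det_fin_three] at this
    simp only [Matrix.map_apply, Matrix.of_apply, Matrix.cons_val', Matrix.cons_val_zero,
      Matrix.cons_val_one, Matrix.cons_val, Matrix.cons_val_fin_one] at this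
    rw [hF 1 one_pos, hF (1+1) (by norm_num), hF (1 + l) (by linarith),
      hF (1 + (l^2+1)) (by positivity), Real.one_rpow, show (1:ℝ)+1 = 2 by norm_num,
      show 1 + (l^2+1) = 2 + l^2 by ring] at this
    have h3 : 0 < c ^ 3 * ((2 ^ α - 1) * ((2 + l ^ 2) ^ α - 1) -
      ((1 + l) ^ α - 1) * ((1 + l) ^ α - 1)) := by
      refine lt_of_lt_of_eq this ?_
      ring
    have := (pos_iff_pos_of_mul_pos h3).mp (by positivity)
    linarith
  -- in terms of u = 1 / l
  have key2 : ∀ l : ℝ, 1 < l → ((1 + l⁻¹) ^ α - (l⁻¹) ^ α) * ((1 + l⁻¹) ^ α - (l⁻¹) ^ α)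
      ≤ (2 ^ α - 1) * ((1 + 2 * (l⁻¹) ^ 2) ^ α - (l⁻¹) ^ α * (l⁻¹) ^ α) := by
    intro l hl
    have hl0 : 0 < l := by linarith
    have hi : 0 < l⁻¹ := by positivity
    have e1 : (1 + l⁻¹) ^ α = (1 + l) ^ α * (l⁻¹) ^ α := by
      rw [← Real.mul_rpow (by positivity) (by positivity)]
      congr 1; field_simp; ring
    have e2 : (1 + 2 * (l⁻¹) ^ 2) ^ α = (2 + l ^ 2) ^ α * ((l⁻¹) ^ α * (l⁻¹) ^ α) := by
      rw [← Real.mul_rpow (by positivity) (by positivity),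
        ← Real.mul_rpow (by positivity) (by positivity)]
      congr 1; field_simp; ring
    rw [e1, e2]
    have := mul_le_mul_of_nonneg_right (key l hl) (show 0 ≤ (l⁻¹) ^ α * (l⁻¹) ^ α by positivity)
    linarith
  have hinv : Tendsto (fun l : ℝ => l⁻¹) atTop (𝓝 0) := tendsto_inv_atTop_zero
  have c1 : Tendsto (fun u : ℝ => ((1 + u) ^ α - u ^ α) * ((1 + u) ^ α - u ^ α)) (𝓝 0) (𝓝 1) := by
    have : ContinuousAt (fun u : ℝ => ((1 + u) ^ α - u ^ α) * ((1 + u) ^ α - u ^ α)) 0 := by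
      have a : ContinuousAt (fun u : ℝ => (1 + u) ^ α) 0 :=
        ContinuousAt.rpow_const (by fun_prop) (Or.inr hα.le)
      have b : ContinuousAt (fun u : ℝ => u ^ α) 0 :=
        ContinuousAt.rpow_const (by fun_prop) (Or.inr hα.le)
      exact (a.sub b).mul (a.sub b)
    have h := this.tendsto
    simpa [Real.zero_rpow hα.ne'] using h
  have c2 : Tendsto (fun u : ℝ => ((2:ℝ) ^ α - 1) * ((1 + 2 * u ^ 2) ^ α - u ^ α * u ^ α)) (𝓝 0)
      (𝓝 ((2:ℝ) ^ α - 1)) := by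
    have : ContinuousAt (fun u : ℝ => ((2:ℝ) ^ α - 1) * ((1 + 2 * u ^ 2) ^ α - u ^ α * u ^ α)) 0 := by
      have a : ContinuousAt (fun u : ℝ => (1 + 2 * u ^ 2) ^ α) 0 :=
        ContinuousAt.rpow_const (by fun_prop) (Or.inr hα.le)
      have b : ContinuousAt (fun u : ℝ => u ^ α) 0 :=
        ContinuousAt.rpow_const (by fun_prop) (Or.inr hα.le)
      exact continuousAt_const.mul (a.sub (b.mul b))
    have h := this.tendsto
    simpa [Real.zero_rpow hα.ne'] using h
  have := le_of_tendsto_of_tendsto (c1.comp hinv) (c2.comp hinv)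
    (by filter_upwards [eventually_gt_atTop 1] with l hl using key2 l hl)
  have h2 : (2:ℝ) ^ (1:ℝ) ≤ 2 ^ α := by rw [Real.rpow_one]; linarith
  exact (Real.rpow_le_rpow_left_iff (by norm_num)).mp h2

lemma mul_convex {α : ℝ} (hα : 1 ≤ α) {l s p : ℝ} (hl : 1 ≤ l) (hs : 0 < s) (hsp : s < p) :
    ((1 + l * s) ^ α - 1) * ((1 + p) ^ α - 1) ≤ ((1 + l * p) ^ α - 1) * ((1 + s) ^ α - 1) := by
  have hα0 : 0 < α := by linarith
  have hder : ∀ k : ℝ, 0 < k → ∀ x : ℝ, 0 ≤ x →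
      HasDerivAt (fun t : ℝ => (1 + k * t) ^ α) (k * α * (1 + k * x) ^ (α - 1)) x := by
    intro k hk x hx
    have h1 : HasDerivAt (fun t : ℝ => 1 + k * t) k x := by
      simpa using ((hasDerivAt_id x).const_mul k).const_add 1
    exact h1.rpow_const (Or.inr hα)
  have hg : ∀ x : ℝ, 0 ≤ x → HasDerivAt (fun t : ℝ => (1 + t) ^ α) (α * (1 + x) ^ (α - 1)) x := by
    intro x hx
    simpa using hder 1 one_pos x hx
  have hf := hder l (by linarith)
  obtain ⟨x, ⟨hx0, hxs⟩, hx⟩ := exists_ratio_hasDerivAt_eq_ratio_slope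
    (fun t : ℝ => (1 + l * t) ^ α) _ hs
    (fun x hx => (hf x hx.1).continuousAt.continuousWithinAt)
    (fun x hx => hf x hx.1.le) (fun t : ℝ => (1 + t) ^ α) _
    (fun x hx => (hg x hx.1).continuousAt.continuousWithinAt)
    (fun x hx => hg x hx.1.le)
  obtain ⟨y, ⟨hys, hyp⟩, hy⟩ := exists_ratio_hasDerivAt_eq_ratio_slope
    (fun t : ℝ => (1 + l * t) ^ α) _ hsp
    (fun x hx => (hf x (hs.le.trans hx.1)).continuousAt.continuousWithinAt)
    (fun x hx => hf x (hs.le.trans hx.1.le)) (fun t : ℝ => (1 + t) ^ α) _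
    (fun x hx => (hg x (hs.le.trans hx.1)).continuousAt.continuousWithinAt)
    (fun x hx => hg x (hs.le.trans hx.1.le))
  simp only [mul_zero, add_zero, Real.one_rpow] at hx hy
  have hy0 : 0 < y := hs.trans hys
  set fs := (1 + l * s) ^ α - 1
  set gs := (1 + s) ^ α - 1
  have hgs : 0 < gs := sub_pos.mpr (Real.one_lt_rpow (by linarith) hα0)
  have hgp : 0 < (1 + p) ^ α - (1 + s) ^ α :=
    sub_pos.mpr (Real.rpow_lt_rpow (by linarith) (by linarith) hα0)
  -- ratio of derivatives
  set fx := (1 + l * x) ^ (α - 1)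
  set gx := (1 + x) ^ (α - 1)
  set fy := (1 + l * y) ^ (α - 1)
  set gy := (1 + y) ^ (α - 1)
  have pgx : 0 < gx := Real.rpow_pos_of_pos (by linarith) _
  have pgy : 0 < gy := Real.rpow_pos_of_pos (by linarith) _
  have hxy : fx * gy ≤ fy * gx := by
    simp only [fx, fy, gx, gy]
    have a1 : 0 ≤ l * x := by positivity
    have a2 : 0 ≤ l * y := by positivity
    rw [← Real.mul_rpow (by linarith) (by linarith), ← Real.mul_rpow (by linarith) (by linarith)]
    apply Real.rpow_le_rpow (by nlinarith [mul_nonneg a1 hy0.le]) _ (by linarith)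
    nlinarith
  have hl0 : 0 < l := by linarith
  have hx' : gs * (l * fx) = fs * gx := by
    apply mul_left_cancel₀ hα0.ne'; linarith
  have hy' : ((1 + p) ^ α - (1 + s) ^ α) * (l * fy) = ((1 + l * p) ^ α - (1 + l * s) ^ α) * gy := by
    apply mul_left_cancel₀ hα0.ne'; linarith
  set gp := (1 + p) ^ α - (1 + s) ^ α with hgpd
  set fp := (1 + l * p) ^ α - (1 + l * s) ^ α with hfpd
  have main : fs * gp ≤ fp * gs := by
    have : (fs * gp) * (gx * gy) ≤ (fp * gs) * (gx * gy) := by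
      calc (fs * gp) * (gx * gy) = (fs * gx) * gp * gy := by ring
        _ = (gs * gp * l) * (fx * gy) := by rw [← hx']; ring
        _ ≤ (gs * gp * l) * (fy * gx) := by gcongr
        _ = (gp * (l * fy)) * gs * gx := by ring
        _ = (fp * gs) * (gx * gy) := by rw [hy']; ring
    exact le_of_mul_le_mul_right this (by positivity)
  have e1 : (1 + p) ^ α - 1 = gp + gs := by simp only [gp, gs]; ring
  have e2 : (1 + l * p) ^ α - 1 = fp + fs := by simp only [fp, fs]; ring
  rw [e1, e2]; linarith

lemma pow_three_aux {α : ℝ} (hα : 1 ≤ α) {s p q r : ℝ} (hs : 0 < s) (hp : s < p) (hq : s < q)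
    (hh : p * q < s * r) :
    ((1 + p) ^ α - 1) * ((1 + q) ^ α - 1) < ((1 + s) ^ α - 1) * ((1 + r) ^ α - 1) := by
  have hα0 : 0 < α := by linarith
  have h1 := mul_convex hα (l := q / s) ((one_le_div hs).mpr hq.le) hs hp
  have e : q / s * s = q := by field_simp
  rw [e] at h1
  have h2 : q / s * p < r := by
    rw [div_mul_eq_mul_div, div_lt_iff₀ hs]; linarith
  have hpos : 0 < q / s * p := by
    have : 0 < q := by linarith
    have : 0 < p := by linarith
    positivity
  have h3 : (1 + q / s * p) ^ α < (1 + r) ^ α :=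
    Real.rpow_lt_rpow (by linarith) (by linarith) hα0
  have hgs : 0 < (1 + s) ^ α - 1 := sub_pos.mpr (Real.one_lt_rpow (by linarith) hα0)
  nlinarith

lemma pow_three_det {α C : ℝ} (hα : 1 ≤ α) (hC : 0 < C) (B : Matrix (Fin 3) (Fin 3) ℝ)
    (hB : IsTPMat B) {F : ℝ → ℝ} (hF : ∀ x, 0 < x → F x = C * x ^ α) : 0 < (B.map F).det := by
  have hdet := hB 3 id id strictMono_id strictMono_id
  rw [Matrix.submatrix_id_id, Matrix.det_fin_three] at hdet
  rw [Matrix.det_fin_three]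
  simp only [Matrix.map_apply]
  have m1 := tp_two hB (i := 0) (i' := 1) (j := 0) (j' := 1) (by decide) (by decide)
  have m2 := tp_two hB (i := 0) (i' := 1) (j := 1) (j' := 2) (by decide) (by decide)
  have m3 := tp_two hB (i := 1) (i' := 2) (j := 0) (j' := 1) (by decide) (by decide)
  have hpos := tp_entry hB
  have pa := hpos 0 0
  have pb := hpos 0 1
  have pc := hpos 0 2
  have pd := hpos 1 0
  have pe := hpos 1 1
  have pf := hpos 1 2
  have pg := hpos 2 0
  have ph := hpos 2 1
  have pk := hpos 2 2
  clear hpos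
  generalize B 0 0 = a at *
  generalize B 0 1 = b at *
  generalize B 0 2 = c at *
  generalize B 1 0 = d at *
  generalize B 1 1 = e at *
  generalize B 1 2 = f at *
  generalize B 2 0 = g at *
  generalize B 2 1 = h at *
  generalize B 2 2 = k at *
  rw [hF a pa, hF b pb, hF c pc, hF d pd, hF e pe, hF f pf, hF g pg, hF h ph, hF k pk]
  have hs : 0 < a * e / (b * d) - 1 := by
    rw [sub_pos, one_lt_div (by positivity)]; exact m1
  have hp : a * e / (b * d) - 1 < a * f / (c * d) - 1 := by
    apply sub_lt_sub_right
    rw [div_lt_div_iff₀ (by positivity) (by positivity)]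
    have := mul_lt_mul_of_pos_right m2 (mul_pos pa pd)
    linarith
  have hq : a * e / (b * d) - 1 < a * h / (b * g) - 1 := by
    apply sub_lt_sub_right
    rw [div_lt_div_iff₀ (by positivity) (by positivity)]
    have := mul_lt_mul_of_pos_right m3 (mul_pos pa pb)
    linarith
  have hh : (a * f / (c * d) - 1) * (a * h / (b * g) - 1) <
      (a * e / (b * d) - 1) * (a * k / (c * g) - 1) := by
    rw [← sub_pos]
    have : (a * e / (b * d) - 1) * (a * k / (c * g) - 1) -
      (a * f / (c * d) - 1) * (a * h / (b * g) - 1) =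
      a * (a * e * k - a * f * h - b * d * k + b * f * g + c * d * h - c * e * g) /
        (b * c * d * g) := by
      field_simp
      ring
    rw [this]
    positivity
  have key := pow_three_aux hα hs hp hq hh
  simp only [add_sub_cancel] at key
  rw [Real.div_rpow (by positivity) (by positivity), Real.div_rpow (by positivity) (by positivity),
    Real.div_rpow (by positivity) (by positivity), Real.div_rpow (by positivity) (by positivity)]
    at key
  repeat rw [Real.mul_rpow (by positivity) (by positivity)] at key
  have pa' := Real.rpow_pos_of_pos pa α
  have pb' := Real.rpow_pos_of_pos pb α
  have pc' := Real.rpow_pos_of_pos pc α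
  have pd' := Real.rpow_pos_of_pos pd α
  have pg' := Real.rpow_pos_of_pos pg α
  generalize a ^ α = a' at *
  generalize b ^ α = b' at *
  generalize c ^ α = c' at *
  generalize d ^ α = d' at *
  generalize e ^ α = e' at *
  generalize f ^ α = f' at *
  generalize g ^ α = g' at *
  generalize h ^ α = h' at *
  generalize k ^ α = k' at *
  rw [← sub_pos] at key
  have e1 : (a' * e' / (b' * d') - 1) * (a' * k' / (c' * g') - 1) -
      (a' * f' / (c' * d') - 1) * (a' * h' / (b' * g') - 1) =
      (a' / (b' * c' * d' * g')) *
      (a' * e' * k' - a' * f' * h' - b' * d' * k' + b' * f' * g' + c' * d' * h' - c' * e' * g') := by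
    field_simp
    ring
  rw [e1] at key
  have := (pos_iff_pos_of_mul_pos key).mp (by positivity)
  have : 0 < C ^ 3 *
    (a' * e' * k' - a' * f' * h' - b' * d' * k' + b' * f' * g' + c' * d' * h' - c' * e' * g') := by
    positivity
  refine lt_of_lt_of_eq this ?_
  ring

lemma pow_two_minor {α C : ℝ} (hα : 0 < α) (hC : 0 < C) {m n : ℕ} {A : Matrix (Fin m) (Fin n) ℝ}
    (hA : IsTPMat A) {F : ℝ → ℝ} (hF : ∀ x, 0 < x → F x = C * x ^ α) (k : ℕ) (hk : k ≤ 2)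
    (r : Fin k → Fin m) (c : Fin k → Fin n) (hr : StrictMono r) (hc : StrictMono c) :
    0 < ((A.map F).submatrix r c).det := by
  have hp := tp_entry hA
  interval_cases k
  · simp
  · rw [Matrix.det_fin_one, Matrix.submatrix_apply, Matrix.map_apply, hF _ (hp _ _)]
    have := Real.rpow_pos_of_pos (hp (r 0) (c 0)) α
    positivity
  · have h2 := tp_two hA (hr (show (0 : Fin 2) < 1 by decide)) (hc (show (0 : Fin 2) < 1 by decide))
    rw [Matrix.det_fin_two]
    simp only [Matrix.submatrix_apply, Matrix.map_apply]
    rw [hF _ (hp _ _), hF _ (hp _ _), hF _ (hp _ _), hF _ (hp _ _)]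
    have h3 := Real.rpow_lt_rpow (mul_nonneg (hp _ _).le (hp _ _).le) h2 hα
    rw [Real.mul_rpow (hp _ _).le (hp _ _).le, Real.mul_rpow (hp _ _).le (hp _ _).le] at h3
    have : 0 < C ^ 2 := by positivity
    nlinarith

lemma tp4 {t : ℝ} (ht : 0 < t) : IsTPMat !![1, 1, 1, 1; 1, 1+3*t, 1+5*t, 1+6*t;
    1, 1+7*t, 1+12*t, 1+15*t; 1, 1+12*t, 1+21*t, 1+27*t+t^3] := by
  intro k r c hr hc
  have := card_le hr
  interval_cases k
  · simp
  · rw [Matrix.det_fin_one, Matrix.submatrix_apply]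
    generalize r 0 = i
    generalize c 0 = j
    fin_cases i <;> fin_cases j <;> simp <;> positivity
  · rw [Matrix.det_fin_two]
    simp only [Matrix.submatrix_apply]
    rcases two4 _ _ (hr (show (0 : Fin 2) < 1 by decide)) with
      ⟨h1, h2⟩ | ⟨h1, h2⟩ | ⟨h1, h2⟩ | ⟨h1, h2⟩ | ⟨h1, h2⟩ | ⟨h1, h2⟩ <;>
    rcases two4 _ _ (hc (show (0 : Fin 2) < 1 by decide)) with
      ⟨h3, h4⟩ | ⟨h3, h4⟩ | ⟨h3, h4⟩ | ⟨h3, h4⟩ | ⟨h3, h4⟩ | ⟨h3, h4⟩ <;>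
    rw [h1, h2, h3, h4] <;>
    simp only [Matrix.of_apply, Matrix.cons_val', Matrix.cons_val_zero,
      Matrix.cons_val_one, Matrix.cons_val, Matrix.cons_val_fin_one] <;> ring_nf <;> positivity
  · rw [Matrix.det_fin_three]
    simp only [Matrix.submatrix_apply]
    rcases tri4 _ _ _ (hr (show (0 : Fin 3) < 1 by decide)) (hr (show (1 : Fin 3) < 2 by decide))
      with ⟨h1, h2, h3⟩ | ⟨h1, h2, h3⟩ | ⟨h1, h2, h3⟩ | ⟨h1, h2, h3⟩ <;>
    rcases tri4 _ _ _ (hc (show (0 : Fin 3) < 1 by decide)) (hc (show (1 : Fin 3) < 2 by decide))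
      with ⟨h4, h5, h6⟩ | ⟨h4, h5, h6⟩ | ⟨h4, h5, h6⟩ | ⟨h4, h5, h6⟩ <;>
    rw [h1, h2, h3, h4, h5, h6] <;>
    simp only [Matrix.of_apply, Matrix.cons_val', Matrix.cons_val_zero,
      Matrix.cons_val_one, Matrix.cons_val, Matrix.cons_val_fin_one] <;> ring_nf <;> positivity
  · rw [id4 r hr, id4 c hc, Matrix.submatrix_id_id, Matrix.det_succ_row_zero]
    simp only [Fin.sum_univ_four, Matrix.det_fin_three]
    simp [Fin.succAbove]
    ring_nf
    positivity

lemma det4_ones (C : ℝ) (a b c d e f g h k : ℝ) :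
    Matrix.det !![C, C, C, C; C, C*a, C*b, C*c; C, C*d, C*e, C*f; C, C*g, C*h, C*k] =
    C ^ 4 * ((a-1)*((e-1)*(k-1)-(f-1)*(h-1)) - (b-1)*((d-1)*(k-1)-(f-1)*(g-1))
      + (c-1)*((d-1)*(h-1)-(e-1)*(g-1))) := by
  rw [Matrix.det_succ_row_zero]
  simp only [Fin.sum_univ_four, Matrix.det_fin_three]
  simp [Fin.succAbove]
  ring

open Filter Topology in
lemma taylor2 (α : ℝ) :
    Tendsto (fun t : ℝ => ((1 + t) ^ α - 1 - α * t) / t ^ 2) (𝓝[≠] 0) (𝓝 (α * (α - 1) / 2)) := by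
  have hder : ∀ β : ℝ, ∀ x : ℝ, -1 < x →
      HasDerivAt (fun t : ℝ => (1 + t) ^ β) (β * (1 + x) ^ (β - 1)) x := by
    intro β x hx
    have h1 : HasDerivAt (fun t : ℝ => 1 + t) 1 x := by
      simpa using (hasDerivAt_id x).const_add 1
    simpa using h1.rpow_const (p := β) (Or.inl (by linarith))
  have hev : ∀ᶠ x : ℝ in 𝓝[≠] 0, -1 < x :=
    nhdsWithin_le_nhds (lt_mem_nhds (by norm_num))
  refine HasDerivAt.lhopital_zero_nhdsNE (f' := fun t => α * (1 + t) ^ (α - 1) - α)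
    (g' := fun t => 2 * t) ?_ ?_ ?_ ?_ ?_ ?_
  · filter_upwards [hev] with x hx
    have := ((hder α x hx).sub_const 1).sub ((hasDerivAt_id x).const_mul α)
    rw [mul_one] at this
    exact this
  · exact Eventually.of_forall fun x => by simpa using hasDerivAt_pow 2 x
  · filter_upwards [self_mem_nhdsWithin] with x hx
    have : x ≠ 0 := hx
    simpa using this
  · have : ContinuousAt (fun t : ℝ => (1 + t) ^ α - 1 - α * t) 0 := by
      have a := (hder α 0 (by norm_num)).continuousAt
      fun_prop
    have := this.tendsto
    simp at this
    exact this.mono_left nhdsWithin_le_nhds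
  · have : ContinuousAt (fun t : ℝ => t ^ 2) 0 := by fun_prop
    have := this.tendsto
    simp at this
    exact this.mono_left nhdsWithin_le_nhds
  · have h1 := (hder (α - 1) 0 (by norm_num)).tendsto_slope_zero
    have h2 := h1.const_mul (α / 2)
    simp only [zero_add, add_zero, Real.one_rpow, mul_one, smul_eq_mul] at h2
    have e : α * (α - 1) / 2 = α / 2 * (α - 1) := by ring
    rw [e]
    refine h2.congr' ?_
    filter_upwards [self_mem_nhdsWithin] with x hx
    have : x ≠ 0 := hx
    field_simp

open Filter Topology in
lemma taylor_comp (α m : ℝ) (hm : 0 < m) (w : ℝ) (hw : 0 ≤ w) :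
    Tendsto (fun t : ℝ => ((1 + (m * t + w * t ^ 3)) ^ α - 1 - α * (m * t)) / t ^ 2) (𝓝[>] 0)
      (𝓝 (α * (α - 1) / 2 * m ^ 2)) := by
  have hc : Tendsto (fun t : ℝ => m * t + w * t ^ 3) (𝓝[>] 0) (𝓝[≠] 0) := by
    apply tendsto_nhdsWithin_of_tendsto_nhds_of_eventually_within
    · have : ContinuousAt (fun t : ℝ => m * t + w * t ^ 3) 0 := by fun_prop
      have := this.tendsto
      simp at this
      exact this.mono_left nhdsWithin_le_nhds
    · filter_upwards [self_mem_nhdsWithin] with x hx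
      have hx : 0 < x := hx
      have : 0 < m * x + w * x ^ 3 := by positivity
      exact this.ne'
  have h1 := (taylor2 α).comp hc
  have h2 : Tendsto (fun t : ℝ => (m + w * t ^ 2) ^ 2) (𝓝[>] 0) (𝓝 (m ^ 2)) := by
    have : ContinuousAt (fun t : ℝ => (m + w * t ^ 2) ^ 2) 0 := by fun_prop
    have := this.tendsto
    simp at this
    exact this.mono_left nhdsWithin_le_nhds
  have h3 : Tendsto (fun t : ℝ => α * w * t) (𝓝[>] 0) (𝓝 0) := by
    have : ContinuousAt (fun t : ℝ => α * w * t) 0 := by fun_prop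
    have := this.tendsto
    simp at this
    exact this.mono_left nhdsWithin_le_nhds
  have h4 := (h1.mul h2).add h3
  rw [add_zero] at h4
  refine h4.congr' ?_
  filter_upwards [self_mem_nhdsWithin] with x hx
  have hx : 0 < x := hx
  have : 0 < m + w * x ^ 2 := by positivity
  simp only [Function.comp]
  have e : m * x + w * x ^ 3 = x * (m + w * x ^ 2) := by ring
  rw [e]
  generalize (1 + x * (m + w * x ^ 2)) ^ α = Z
  field_simp
  ring

open Filter Topology in
lemma alpha_eq_one {F : ℝ → ℝ} (h : Pres F 4 4) {c α : ℝ} (hc : 0 < c) (hα : 1 ≤ α)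
    (hF : ∀ x : ℝ, 0 < x → F x = c * x ^ α) : α = 1 := by
  by_contra hne
  have hα1 : 1 < α := lt_of_le_of_ne hα (Ne.symm hne)
  let U : ℝ → ℝ → ℝ → ℝ := fun m w t => ((1 + (m * t + w * t ^ 3)) ^ α - 1 - α * (m * t)) / t ^ 2
  have hU : ∀ m w t, 0 < t → (1 + (m * t + w * t ^ 3)) ^ α - 1 = t * (α * m + t * U m w t) := by
    intro m w t ht
    simp only [U]
    field_simp
    ring
  have lim := fun (m w : ℝ) (hm : 0 < m) (hw : 0 ≤ w) => taylor_comp α m hm w hw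
  let D : ℝ → ℝ → ℝ → ℝ → ℝ → ℝ → ℝ → ℝ → ℝ → ℝ → ℝ := fun t a b c d e f g h k =>
    α ^ 2 * ((12*27-15*21)*a + 3*27*e + 3*12*k - 3*15*h - 3*21*f
      - (7*27-15*12)*b - 5*27*d - 5*7*k + 5*15*g + 5*12*f
      + (7*21-12*12)*c + 6*21*d + 6*7*h - 6*12*g - 6*12*e)
    + t * α * (3*(e*k-f*h) + 12*(a*k-c*g) + 27*(a*e-b*d) - 15*(a*h-b*g) - 21*(a*f-c*d)
      - 5*(d*k-f*g) - 7*(b*k-c*h) + 12*(b*f-c*e) + 6*(d*h-e*g))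
    + t^2 * (a*(e*k-f*h) - b*(d*k-f*g) + c*(d*h-e*g))
  have hpos : ∀ t : ℝ, 0 < t → 0 < D t (U 3 0 t) (U 5 0 t) (U 6 0 t) (U 7 0 t) (U 12 0 t)
      (U 15 0 t) (U 12 0 t) (U 21 0 t) (U 27 1 t) := by
    intro t ht
    have h1 := h _ (tp4 ht) 4 id id strictMono_id strictMono_id
    rw [Matrix.submatrix_id_id] at h1
    have e : (!![1, 1, 1, 1; 1, 1+3*t, 1+5*t, 1+6*t;
        1, 1+7*t, 1+12*t, 1+15*t; 1, 1+12*t, 1+21*t, 1+27*t+t^3]).map F =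
        !![c, c, c, c; c, c * (1+(3*t+0*t^3))^α, c * (1+(5*t+0*t^3))^α, c * (1+(6*t+0*t^3))^α;
          c, c * (1+(7*t+0*t^3))^α, c * (1+(12*t+0*t^3))^α, c * (1+(15*t+0*t^3))^α;
          c, c * (1+(12*t+0*t^3))^α, c * (1+(21*t+0*t^3))^α, c * (1+(27*t+1*t^3))^α] := by
      have hF1 : F 1 = c := by rw [hF 1 one_pos]; simp
      ext i j
      fin_cases i <;> fin_cases j <;> simp [hF1, ← add_assoc] <;> exact hF _ (by positivity)
    rw [e, det4_ones, hU _ _ _ ht, hU _ _ _ ht, hU _ _ _ ht, hU _ _ _ ht, hU _ _ _ ht, hU _ _ _ ht,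
      hU _ _ _ ht, hU _ _ _ ht] at h1
    generalize U 3 0 t = a at *
    generalize U 5 0 t = b at *
    generalize U 6 0 t = c' at *
    generalize U 7 0 t = d at *
    generalize U 12 0 t = e at *
    generalize U 15 0 t = f at *
    generalize U 21 0 t = h at *
    generalize U 27 1 t = k at *
    have h2 : 0 < (c ^ 4 * t ^ 4) * D t a b c' d e f e h k := by
      refine lt_of_lt_of_eq h1 ?_
      simp only [D]
      ring
    exact (pos_iff_pos_of_mul_pos h2).mp (by positivity)
  have ht0 : Tendsto (fun t : ℝ => t) (𝓝[>] 0) (𝓝 0) := tendsto_id.mono_left nhdsWithin_le_nhds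
  have hcont : Continuous (fun v : Fin 9 → ℝ => D (v 8) (v 0) (v 1) (v 2) (v 3) (v 4) (v 5) (v 4)
      (v 6) (v 7)) := by
    simp only [D]
    fun_prop
  let K := α * (α - 1) / 2
  have hv : Tendsto (fun t : ℝ => (![U 3 0 t, U 5 0 t, U 6 0 t, U 7 0 t, U 12 0 t, U 15 0 t,
      U 21 0 t, U 27 1 t, t] : Fin 9 → ℝ)) (𝓝[>] 0)
      (𝓝 ![K * 3^2, K * 5^2, K * 6^2, K * 7^2, K * 12^2, K * 15^2, K * 21^2, K * 27^2, 0]) := by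
    rw [tendsto_pi_nhds]
    intro i
    fin_cases i
    · exact lim 3 0 (by norm_num) (by norm_num)
    · exact lim 5 0 (by norm_num) (by norm_num)
    · exact lim 6 0 (by norm_num) (by norm_num)
    · exact lim 7 0 (by norm_num) (by norm_num)
    · exact lim 12 0 (by norm_num) (by norm_num)
    · exact lim 15 0 (by norm_num) (by norm_num)
    · exact lim 21 0 (by norm_num) (by norm_num)
    · exact lim 27 1 (by norm_num) (by norm_num)
    · exact ht0
  have hlim := (hcont.tendsto _).comp hv
  have hge := ge_of_tendsto hlim (b := 0) (by
    filter_upwards [self_mem_nhdsWithin] with t ht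
    exact (hpos t ht).le)
  have hK : 0 < K := by
    have : 0 < α - 1 := by linarith
    simp only [K]
    positivity
  have heq : D 0 (K * 3^2) (K * 5^2) (K * 6^2) (K * 7^2) (K * 12^2) (K * 15^2) (K * 12^2)
    (K * 21^2) (K * 27^2) = - 18 * (α ^ 2 * K) := by
    simp only [D]; ring
  have hge' : 0 ≤ - 18 * (α ^ 2 * K) := by
    rw [← heq]; exact hge
  have : 0 < α ^ 2 * K := by positivity
  linarith

/-- Condition (3). -/
def Cond (F : ℝ → ℝ) (d : ℕ) : Prop :=
  (d = 1 ∧ ∀ x : ℝ, 0 < x → 0 < F x) ∨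
         (d = 2 ∧ ∃ c : ℝ, 0 < c ∧ ∃ α : ℝ, 0 < α ∧
           ∀ x : ℝ, 0 < x → F x = c * x ^ α) ∨
         (d = 3 ∧ ∃ c : ℝ, 0 < c ∧ ∃ α : ℝ, 1 ≤ α ∧
           ∀ x : ℝ, 0 < x → F x = c * x ^ α) ∨
         (4 ≤ d ∧ ∃ c : ℝ, 0 < c ∧ ∀ x : ℝ, 0 < x → F x = c * x)

lemma pres_iff (F : ℝ → ℝ) (m n : ℕ) (hm : 0 < m) (hn : 0 < n) (d : ℕ)
    (hd : d = min m n) : Pres F m n ↔ Cond F d := by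
  have hdm : d ≤ m := by omega
  have hdn : d ≤ n := by omega
  constructor
  · intro h
    have hpos : ∀ x, 0 < x → 0 < F x := fun x hx => pres_pos (pres_le hm hn h) hx
    by_cases h2 : 2 ≤ d
    · obtain ⟨c, hc, α, hα, hF⟩ := power_form hpos
        (fun a b c d => pres_two (pres_le (h2.trans hdm) (h2.trans hdn) h))
      by_cases h3 : 3 ≤ d
      · have hα1 := alpha_ge_one (pres_le (h3.trans hdm) (h3.trans hdn) h) hc hα hF
        by_cases h4 : 4 ≤ d
        · have := alpha_eq_one (pres_le (h4.trans hdm) (h4.trans hdn) h) hc hα1 hF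
          subst this
          exact Or.inr (Or.inr (Or.inr ⟨h4, c, hc, fun x hx => by rw [hF x hx, Real.rpow_one]⟩))
        · exact Or.inr (Or.inr (Or.inl ⟨by omega, c, hc, α, hα1, hF⟩))
      · exact Or.inr (Or.inl ⟨by omega, c, hc, α, hα, hF⟩)
    · exact Or.inl ⟨by omega, hpos⟩
  · intro h A hA k r s hr hs
    have hkd : k ≤ d := by
      have := card_le hr
      have := card_le hs
      omega
    rcases h with ⟨h1, hF⟩ | ⟨h1, c, hc, α, hα, hF⟩ | ⟨h1, c, hc, α, hα, hF⟩ | ⟨h1, c, hc, hF⟩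
    · rw [h1] at hkd
      interval_cases k
      · simp
      · simpa using hF _ (tp_entry hA _ _)
    · exact pow_two_minor hα hc hA hF k (by omega) r s hr hs
    · by_cases hk : k ≤ 2
      · exact pow_two_minor (by linarith) hc hA hF k hk r s hr hs
      · obtain rfl : k = 3 := by omega
        exact pow_three_det hα hc _ (tp_sub hA r s hr hs) hF
    · have e : (A.map F).submatrix r s = c • A.submatrix r s := by
        ext i j
        simp [hF _ (tp_entry hA _ _)]
      rw [e, Matrix.det_smul]
      have := hA k r s hr hs
      positivity

theorem stmt_3 (F : ℝ → ℝ) (m n : ℕ) (hm : 0 < m) (hn : 0 < n) (d : ℕ)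
    (hd : d = min m n) :
    List.TFAE
      [∀ A : Matrix (Fin m) (Fin n) ℝ, IsTPMat A → IsTPMat (A.map F),
       ∀ A : Matrix (Fin d) (Fin d) ℝ, IsTPMat A → IsTPMat (A.map F),
       (d = 1 ∧ ∀ x : ℝ, 0 < x → 0 < F x) ∨
         (d = 2 ∧ ∃ c : ℝ, 0 < c ∧ ∃ α : ℝ, 0 < α ∧
           ∀ x : ℝ, 0 < x → F x = c * x ^ α) ∨
         (d = 3 ∧ ∃ c : ℝ, 0 < c ∧ ∃ α : ℝ, 1 ≤ α ∧
           ∀ x : ℝ, 0 < x → F x = c * x ^ α) ∨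
         (4 ≤ d ∧ ∃ c : ℝ, 0 < c ∧ ∀ x : ℝ, 0 < x → F x = c * x)] := by

  have hd0 : 0 < d := by omega
  tfae_have 1 ↔ 3 := pres_iff F m n hm hn d hd
  tfae_have 2 ↔ 3 := pres_iff F d d hd0 hd0 d (by simp)
  tfae_finish
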